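/- arXiv:1611.03571 — 2 statements merged into one kernel-verified Lean document; each statement's English description precedes it below -/
import Mathlib

section
/- ζ(3) = ∫₀¹ log(1+t) · log(1+1/t) / t dt. -/
open MeasureTheory Real

/-!
Expanding `-log (1 - exp (-t)) = ∑ exp (-(n + 1) t) / (n + 1)` and integrating against `t` gives
`ζ(3)`, and the substitution `x = exp (-t)` turns this into `ζ(3) = ∫₀¹ log x log (1 - x) / x dx`.
On the other side, `t = 1 / x - 1` maps `(1/2, 1)` onto `(0, 1)` and transforms
`log (1 + t) log (1 + 1/t) / t dt` into `log x log (1 - x) / (x (1 - x)) dx`. Since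
`1 / (x (1 - x)) = 1 / x + 1 / (1 - x)`, this integrand is `f x + f (1 - x)` with
`f x = log x log (1 - x) / x`, so its integral over the right half of `(0, 1)` is that of `f` over
the whole interval.
-/

open Set
open scoped Nat

theorem hasSum_neg_log_one_sub_exp_neg {t : ℝ} (ht : 0 < t) :
    HasSum (fun n : ℕ ↦ 1 / ((n : ℝ) + 1) * exp (-((n : ℝ) + 1) * t)) (-log (1 - exp (-t))) := by
  have h : |exp (-t)| < 1 := by simpa only [abs_exp, exp_lt_one_iff, neg_lt_zero] using ht
  refine (hasSum_pow_div_log_of_abs_lt_one h).congr_fun fun n ↦ ?_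
  rw [← exp_nat_mul]
  push_cast
  ring_nf

theorem mellin_neg_log_one_sub_exp_neg {s : ℂ} (hs : 0 < s.re) :
    mellin (fun t : ℝ ↦ (-log (1 - exp (-t)) : ℂ)) s =
      Complex.Gamma s * riemannZeta (s + 1) := by
  have hsum : Summable fun n : ℕ ↦ ‖((1 / ((n : ℝ) + 1) : ℝ) : ℂ)‖ / ((n : ℝ) + 1) ^ s.re := by
    refine ((summable_one_div_nat_add_rpow 1 (s.re + 1)).2 (by linarith)).congr fun n ↦ ?_
    have hn : 0 < (n : ℝ) + 1 := n.cast_add_one_pos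
    rw [abs_of_pos hn, rpow_add_one hn.ne', Complex.norm_of_nonneg (by positivity)]
    field_simp
  have h := hasSum_mellin (F := fun t : ℝ ↦ (-log (1 - exp (-t)) : ℂ))
    (fun n ↦ .inr n.cast_add_one_pos) hs
    (fun t ht ↦ mod_cast hasSum_neg_log_one_sub_exp_neg ht) hsum
  rw [← h.tsum_eq, zeta_eq_tsum_one_div_nat_add_one_cpow (by simpa using hs), ← tsum_mul_left]
  refine tsum_congr fun n ↦ ?_
  have hn : (n : ℂ) + 1 ≠ 0 := n.cast_add_one_ne_zero
  push_cast
  rw [Complex.cpow_add _ _ hn, Complex.cpow_one]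
  field_simp

theorem integral_pow_mul_neg_log_one_sub_exp_neg (k : ℕ) :
    ∫ t in Ioi (0 : ℝ), t ^ k * -log (1 - exp (-t)) =
      k ! * ∑' n : ℕ, 1 / ((n : ℝ) + 1) ^ (k + 2) := by
  have hk : (0 : ℝ) < k + 1 := k.cast_add_one_pos
  have h := mellin_neg_log_one_sub_exp_neg (s := k + 1) (by simpa using hk)
  rw [Complex.Gamma_nat_eq_factorial,
    zeta_eq_tsum_one_div_nat_add_one_cpow (by simpa using hk)] at h
  apply Complex.ofReal_injective
  push_cast
  rw [← integral_complex_ofReal]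
  convert h using 1
  · simp only [mellin, add_sub_cancel_right, Complex.cpow_natCast, smul_eq_mul]
    push_cast
    rfl
  · congr with n
    norm_cast

section ChangeOfVariables

variable {E : Type*} [NormedAddCommGroup E] [NormedSpace ℝ E]

theorem integral_comp_exp_neg_Ioi (g : ℝ → E) (a : ℝ) :
    ∫ t in Ioi a, exp (-t) • g (exp (-t)) = ∫ x in Ioo 0 (exp (-a)), g x := by
  rw [integral_comp_neg_Ioi a fun t ↦ exp t • g (exp t), integral_Iic_eq_integral_Iio,
    ← image_exp_Iio, integral_image_eq_integral_deriv_smul_of_monotoneOn measurableSet_Iio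
      (fun x _ ↦ (hasDerivAt_exp x).hasDerivWithinAt) (exp_monotone.monotoneOn _)]

theorem intervalIntegral_inv_sq_smul_comp_inv (g : ℝ → E) {a b : ℝ} (ha : 0 < a) (hb : 0 < b) :
    ∫ x in a..b, (x ^ 2)⁻¹ • g x⁻¹ = ∫ y in b⁻¹..a⁻¹, g y := by
  wlog hab : a ≤ b generalizing a b
  · rw [intervalIntegral.integral_symm, this hb ha (le_of_not_ge hab),
      intervalIntegral.integral_symm, neg_neg]
  have hne : ∀ x ∈ Icc a b, x ≠ 0 := fun x hx ↦ (ha.trans_le hx.1).ne'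
  rw [intervalIntegral.integral_of_le hab, intervalIntegral.integral_of_le (inv_anti₀ ha hab),
    ← integral_Icc_eq_integral_Ioc, ← integral_Icc_eq_integral_Ioc, ← neg_inj,
    ← integral_Icc_deriv_smul_of_deriv_nonpos (continuousOn_inv₀.mono hne)
      (fun x hx ↦ hasDerivAt_inv (hne x (Ioo_subset_Icc_self hx)))
      (fun x _ ↦ neg_nonpos.2 (by positivity)) hab, ← integral_neg]
  simp only [neg_smul]

theorem intervalIntegral_midpoint_add_comp_sub_left {f : ℝ → E} {a b : ℝ}
    (hf : IntervalIntegrable f volume a b) :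
    ∫ x in (a + b) / 2..b, (f x + f (a + b - x)) = ∫ x in a..b, f x := by
  have hmem : (a + b) / 2 ∈ uIcc a b := by
    rw [← segment_eq_uIcc]
    simpa [midpoint_eq_smul_add, div_eq_inv_mul] using midpoint_mem_segment (𝕜 := ℝ) a b
  have hreflect : a + b - (a + b) / 2 = (a + b) / 2 := sub_half _
  have hl : IntervalIntegrable f volume a ((a + b) / 2) := hf.mono_set (uIcc_subset_uIcc_left hmem)
  have hr : IntervalIntegrable f volume ((a + b) / 2) b := hf.mono_set (uIcc_subset_uIcc_right hmem)
  have hl' : IntervalIntegrable (fun x ↦ f (a + b - x)) volume ((a + b) / 2) b := by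
    simpa only [hreflect, add_sub_cancel_left] using (hl.comp_sub_left (a + b)).symm
  rw [intervalIntegral.integral_add hr hl', intervalIntegral.integral_comp_sub_left,
    add_sub_cancel_right, hreflect, add_comm,
    intervalIntegral.integral_add_adjacent_intervals hl hr]

end ChangeOfVariables

theorem integral_neg_log_pow_mul_neg_log_one_sub_div (k : ℕ) :
    ∫ x in (0 : ℝ)..1, (-log x) ^ k * -log (1 - x) / x =
      k ! * ∑' n : ℕ, 1 / ((n : ℝ) + 1) ^ (k + 2) := by
  have h := integral_comp_exp_neg_Ioi (fun x ↦ (-log x) ^ k * -log (1 - x) / x) 0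
  rw [neg_zero, exp_zero] at h
  rw [intervalIntegral.integral_of_le zero_le_one, integral_Ioc_eq_integral_Ioo, ← h,
    ← integral_pow_mul_neg_log_one_sub_exp_neg]
  congr with t
  rw [smul_eq_mul, mul_div_cancel₀ _ (exp_ne_zero _), log_exp, neg_neg]

theorem intervalIntegrable_neg_log_pow_mul_neg_log_one_sub_div (k : ℕ) :
    IntervalIntegrable (fun x ↦ (-log x) ^ k * -log (1 - x) / x) volume 0 1 := by
  have hsum : Summable fun n : ℕ ↦ 1 / ((n : ℝ) + 1) ^ (k + 2) :=
    mod_cast (summable_nat_add_iff 1).2 (summable_one_div_nat_pow.2 (by lia : 1 < k + 2))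
  have hpos : 0 < ∑' n : ℕ, 1 / ((n : ℝ) + 1) ^ (k + 2) :=
    hsum.tsum_pos (fun n ↦ by positivity) 0 (by positivity)
  rw [intervalIntegrable_iff_integrableOn_Ioc_of_le zero_le_one]
  -- The Bochner integral of a non-integrable function is `0`, and this one is positive.
  refine Integrable.of_integral_ne_zero ?_
  rw [← intervalIntegral.integral_of_le zero_le_one, integral_neg_log_pow_mul_neg_log_one_sub_div]
  positivity

theorem inv_sq_mul_log_inv_mul_log_div {x : ℝ} (h0 : x ≠ 0) (h1 : x ≠ 1) :
    (x ^ 2)⁻¹ * (log x⁻¹ * log (1 + 1 / (x⁻¹ - 1)) / (x⁻¹ - 1)) =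
      log x * log (1 - x) / x + log (1 - x) * log x / (1 - x) := by
  have h1' : 1 - x ≠ 0 := sub_ne_zero.2 h1.symm
  have hsub : x⁻¹ - 1 = (1 - x) / x := by field_simp
  have hadd : 1 + 1 / (x⁻¹ - 1) = (1 - x)⁻¹ := by
    rw [hsub]
    field_simp
    ring
  rw [hadd, hsub, log_inv, log_inv]
  field_simp
  ring

theorem integral_log_one_add_mul_log_one_add_one_div_div :
    ∫ t in (0 : ℝ)..1, log (1 + t) * log (1 + 1 / t) / t =
      ∫ x in (1 / 2 : ℝ)..1,
        (log x * log (1 - x) / x + log (1 - x) * log x / (1 - x)) := by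
  let g (y : ℝ) : ℝ := log y * log (1 + 1 / (y - 1)) / (y - 1)
  calc ∫ t in (0 : ℝ)..1, log (1 + t) * log (1 + 1 / t) / t
    _ = ∫ y in (1 : ℝ)..2, g y := by
      simpa [g, one_add_one_eq_two] using
        intervalIntegral.integral_comp_add_left g (1 : ℝ) (a := 0) (b := 1)
    _ = ∫ x in (1 / 2 : ℝ)..1, (x ^ 2)⁻¹ * g x⁻¹ := by
      simpa using (intervalIntegral_inv_sq_smul_comp_inv g one_half_pos one_pos).symm
    _ = ∫ x in (1 / 2 : ℝ)..1,
          (log x * log (1 - x) / x + log (1 - x) * log x / (1 - x)) :=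
      intervalIntegral.integral_congr_Ioo_of_le one_half_lt_one.le fun x hx ↦
        inv_sq_mul_log_inv_mul_log_div (one_half_pos.trans hx.1).ne' hx.2.ne

theorem stmt17 :
    (∑' n : ℕ, 1 / ((n : ℝ) + 1) ^ 3) =
      ∫ t in (0:ℝ)..1, Real.log (1 + t) * Real.log (1 + 1 / t) / t := by
  calc ∑' n : ℕ, 1 / ((n : ℝ) + 1) ^ 3
    _ = ∫ x in (0 : ℝ)..1, log x * log (1 - x) / x := by
      simpa using (integral_neg_log_pow_mul_neg_log_one_sub_div 1).symm
    _ = ∫ x in (1 / 2 : ℝ)..1,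
          (log x * log (1 - x) / x + log (1 - x) * log x / (1 - x)) := by
      simpa using (intervalIntegral_midpoint_add_comp_sub_left
        (intervalIntegrable_neg_log_pow_mul_neg_log_one_sub_div 1)).symm
    _ = ∫ t in (0 : ℝ)..1, log (1 + t) * log (1 + 1 / t) / t :=
      integral_log_one_add_mul_log_one_add_one_div_div.symm
end

section
/- ∫₀¹ (arctan t)²/t dt = (π/2)·G - (7/8)·ζ(3), where G = ∑_{n=0}^∞ (-1)ⁿ/(2n+1)² is Catalan's constant. -/
open MeasureTheory Real

open Filter Set
open scoped Topology FourierTransform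

/-!
The half-angle substitution `x = 2 arctan t` turns the integral into a quarter of
`∫ x in 0..π/2, x² / sin x`. Multiplying the telescoping identity
`∑_{k<n} 2 sin((2k+1)x) sin x = 1 - cos(2nx)` by a function `g` and letting `n → ∞`, the
Riemann–Lebesgue lemma kills the cosine term, so that
`∫ g = ∑ₖ ∫ 2 sin((2k+1)x) (sin x · g x)`. For `g x = x² / sin x` the summands are the
elementary integrals `2 ∫ x² sin((2k+1)x)`, whose values add up to Catalan's constant and to the
sum of the inverse odd cubes, which is `7/8 ζ(3)`.
-/

section HalfAngleSubstitution

theorem sin_two_mul_arctan (t : ℝ) : sin (2 * arctan t) = 2 * t / (1 + t ^ 2) := by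
  have hcos : cos (arctan t) ≠ 0 := (cos_arctan_pos t).ne'
  calc sin (2 * arctan t) = 2 * tan (arctan t) * cos (arctan t) ^ 2 := by
        rw [sin_two_mul, tan_eq_sin_div_cos]
        field_simp
    _ = 2 * t / (1 + t ^ 2) := by
        rw [tan_arctan, cos_sq_arctan, mul_one_div]

theorem integral_comp_two_mul_arctan_div (f : ℝ → ℝ) (a b : ℝ) :
    ∫ t in a..b, f (2 * arctan t) / t =
      ∫ x in (2 * arctan a)..(2 * arctan b), f x / sin x := by
  have hderiv (t : ℝ) : HasDerivAt (fun t ↦ 2 * arctan t) (2 * (1 / (1 + t ^ 2))) t :=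
    (hasDerivAt_arctan t).const_mul 2
  rw [← intervalIntegral.integral_comp_mul_deriv_of_deriv_nonneg
    (by fun_prop) (fun t _ ↦ hderiv t) (fun t _ ↦ by positivity)]
  refine intervalIntegral.integral_congr fun t _ ↦ ?_
  have ht : 1 + t ^ 2 ≠ 0 := by positivity
  simp only [Function.comp_apply, sin_two_mul_arctan]
  field_simp

theorem integral_arctan_sq_div (a b : ℝ) :
    ∫ t in a..b, arctan t ^ 2 / t =
      1 / 4 * ∫ x in (2 * arctan a)..(2 * arctan b), x ^ 2 / sin x := by
  rw [← integral_comp_two_mul_arctan_div (· ^ 2), ← intervalIntegral.integral_const_mul]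
  refine intervalIntegral.integral_congr fun t _ ↦ ?_
  ring

end HalfAngleSubstitution

section RiemannLebesgue

variable {f : ℝ → ℝ}

theorem tendsto_integral_cos_mul_cocompact (hf : Integrable f) :
    Tendsto (fun w ↦ ∫ x, cos (w * x) * f x) (cocompact ℝ) (𝓝 0) := by
  have hscale : Tendsto (fun w : ℝ ↦ w * (2 * π)⁻¹) (cocompact ℝ) (cocompact ℝ) :=
    tendsto_cocompact_mul_right₀ (inv_ne_zero two_pi_pos.ne')
  have hfourier := (Real.tendsto_integral_exp_smul_cocompact fun x ↦ (f x : ℂ)).comp hscale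
  refine ((Complex.continuous_re.tendsto 0).comp hfourier).congr fun w ↦ ?_
  have hint : Integrable fun x ↦ 𝐞 (-(x * (w * (2 * π)⁻¹))) • (f x : ℂ) := by
    simpa [mul_comm] using
      (fourierIntegral_convergent_iff (w * (2 * π)⁻¹)).2 (hf.ofReal (𝕜 := ℂ))
  simp only [Function.comp_apply]
  rw [← RCLike.re_eq_complex_re, ← integral_re hint]
  congr! 2 with x
  have hangle : 2 * π * -(x * (w * (2 * π)⁻¹)) = -(w * x) := by field_simp
  simp only [RCLike.re_eq_complex_re, Circle.smul_def, fourierChar_apply, smul_eq_mul, hangle,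
    Complex.re_mul_ofReal, Complex.exp_ofReal_mul_I_re, cos_neg]

theorem tendsto_setIntegral_cos_mul_cocompact {s : Set ℝ} (hs : MeasurableSet s)
    (hf : IntegrableOn f s) :
    Tendsto (fun w ↦ ∫ x in s, cos (w * x) * f x) (cocompact ℝ) (𝓝 0) := by
  refine (tendsto_integral_cos_mul_cocompact (hf.integrable_indicator hs)).congr fun w ↦ ?_
  simp_rw [← indicator_mul_right s (fun x ↦ cos (w * x)), integral_indicator hs]

theorem tendsto_intervalIntegral_cos_mul_cocompact {a b : ℝ}
    (hf : IntervalIntegrable f volume a b) :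
    Tendsto (fun w ↦ ∫ x in a..b, cos (w * x) * f x) (cocompact ℝ) (𝓝 0) := by
  simpa only [intervalIntegral, sub_zero] using
    (tendsto_setIntegral_cos_mul_cocompact measurableSet_Ioc hf.1).sub
      (tendsto_setIntegral_cos_mul_cocompact measurableSet_Ioc hf.2)

end RiemannLebesgue

section OddSineExpansion

theorem sum_two_mul_sin_odd_mul_sin (x : ℝ) (n : ℕ) :
    (∑ k ∈ Finset.range n, 2 * sin ((2 * k + 1) * x)) * sin x = 1 - cos (2 * n * x) := by
  calc (∑ k ∈ Finset.range n, 2 * sin ((2 * k + 1) * x)) * sin x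
      = ∑ k ∈ Finset.range n, (cos (2 * k * x) - cos (2 * (k + 1 : ℕ) * x)) := by
        rw [Finset.sum_mul]
        refine Finset.sum_congr rfl fun k _ ↦ ?_
        rw [two_mul_sin_mul_sin]
        push_cast
        ring_nf
    _ = 1 - cos (2 * n * x) := by
        rw [Finset.sum_range_sub' fun k : ℕ ↦ cos (2 * k * x)]
        simp

theorem tendsto_sum_integral_sin_odd_mul_sin_mul {g : ℝ → ℝ} {a b : ℝ}
    (hg : IntervalIntegrable g volume a b) :
    Tendsto
      (fun n ↦ ∑ k ∈ Finset.range n, ∫ x in a..b, 2 * sin ((2 * k + 1) * x) * (sin x * g x))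
      atTop (𝓝 (∫ x in a..b, g x)) := by
  have hfreq : Tendsto (fun n : ℕ ↦ 2 * (n : ℝ)) atTop (cocompact ℝ) :=
    (tendsto_natCast_atTop_atTop.const_mul_atTop two_pos).mono_right atTop_le_cocompact
  have hcos := (tendsto_intervalIntegral_cos_mul_cocompact hg).comp hfreq
  have hsum (n : ℕ) :
      ∑ k ∈ Finset.range n, ∫ x in a..b, 2 * sin ((2 * k + 1) * x) * (sin x * g x) =
        (∫ x in a..b, g x) - ∫ x in a..b, cos (2 * n * x) * g x := by
    rw [← intervalIntegral.integral_finsetSum fun k _ ↦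
        (hg.continuousOn_mul (by fun_prop)).continuousOn_mul (by fun_prop),
      ← intervalIntegral.integral_sub hg (hg.continuousOn_mul (by fun_prop))]
    refine intervalIntegral.integral_congr fun x _ ↦ ?_
    simp only [← mul_assoc, ← Finset.sum_mul, sum_two_mul_sin_odd_mul_sin]
    ring
  simpa only [sub_zero] using (tendsto_const_nhds.sub hcos).congr fun n ↦ (hsum n).symm

end OddSineExpansion

section SqDivSin

theorem continuousOn_sq_div_sin : ContinuousOn (fun x ↦ x ^ 2 / sin x) (Ioo (-π) π) := by
  have hsinc : ∀ x ∈ Ioo (-π) π, sinc x ≠ 0 := by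
    intro x hx
    rcases eq_or_ne x 0 with rfl | hx0
    · simp
    · rw [sinc_of_ne_zero hx0]
      exact div_ne_zero (by rwa [Ne, sin_eq_zero_iff_of_lt_of_lt hx.1 hx.2]) hx0
  refine (continuousOn_id.div continuous_sinc.continuousOn hsinc).congr fun x _ ↦ ?_
  rcases eq_or_ne x 0 with rfl | hx0
  · simp
  · simp only [Pi.div_apply, id, sinc_of_ne_zero hx0]
    field_simp

theorem integral_sq_mul_sin {m : ℝ} (hm : m ≠ 0) (b : ℝ) :
    ∫ x in (0 : ℝ)..b, x ^ 2 * sin (m * x) =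
      -(b ^ 2 * cos (m * b)) / m + 2 * (b * sin (m * b)) / m ^ 2 +
        2 * (cos (m * b) - 1) / m ^ 3 := by
  have hderiv (x : ℝ) : HasDerivAt (fun x ↦ -(x ^ 2 * cos (m * x)) / m +
      2 * (x * sin (m * x)) / m ^ 2 + 2 * (cos (m * x) - 1) / m ^ 3) (x ^ 2 * sin (m * x)) x := by
    have hlin : HasDerivAt (fun x ↦ m * x) m x := hasDerivAt_const_mul m
    have hsq : HasDerivAt (fun x : ℝ ↦ x ^ 2) (2 * x) x := by simpa using hasDerivAt_pow 2 x
    convert! (((hsq.fun_mul hlin.cos).fun_neg.div_const m).fun_add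
      ((((hasDerivAt_id x).fun_mul hlin.sin).const_mul 2).div_const (m ^ 2))).fun_add
      (((hlin.cos.sub_const 1).const_mul 2).div_const (m ^ 3)) using 1
    simp only [id]
    field_simp
    ring
  rw [intervalIntegral.integral_eq_sub_of_hasDerivAt (fun x _ ↦ hderiv x)
    (Continuous.intervalIntegrable (by fun_prop) _ _)]
  simp

theorem integral_sq_mul_sin_odd (k : ℕ) :
    ∫ x in (0 : ℝ)..(π / 2), x ^ 2 * sin ((2 * k + 1) * x) =
      π * ((-1) ^ k / (2 * k + 1) ^ 2) - 2 * (1 / (2 * k + 1) ^ 3) := by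
  have hangle : (2 * (k : ℝ) + 1) * (π / 2) = π / 2 + k * π := by ring
  have hm : 2 * (k : ℝ) + 1 ≠ 0 := by positivity
  rw [integral_sq_mul_sin hm, hangle, sin_add_nat_mul_pi, cos_add_nat_mul_pi, sin_pi_div_two,
    cos_pi_div_two]
  field_simp
  ring

end SqDivSin

section OddZeta

variable {p : ℕ}

theorem summable_one_div_odd_pow (hp : 1 < p) :
    Summable fun n : ℕ ↦ 1 / (2 * (n : ℝ) + 1) ^ p := by
  have hinj : Function.Injective fun n : ℕ ↦ 2 * n + 1 := fun _ _ h ↦ by simpa using h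
  simpa [Function.comp_def] using (summable_one_div_nat_pow.2 hp).comp_injective hinj

theorem summable_neg_one_pow_div_odd_pow (hp : 1 < p) :
    Summable fun n : ℕ ↦ (-1) ^ n / (2 * (n : ℝ) + 1) ^ p := by
  refine .of_norm ((summable_one_div_odd_pow hp).congr fun n ↦ ?_)
  have hn : 0 ≤ 2 * (n : ℝ) + 1 := by positivity
  simp [abs_of_nonneg hn]

theorem tsum_one_div_odd_pow (hp : 1 < p) :
    ∑' n : ℕ, 1 / (2 * (n : ℝ) + 1) ^ p =
      (1 - 1 / 2 ^ p) * ∑' n : ℕ, 1 / ((n : ℝ) + 1) ^ p := by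
  have hsucc : Summable fun n : ℕ ↦ 1 / ((n : ℝ) + 1) ^ p := by
    simpa using (summable_nat_add_iff 1).2 (summable_one_div_nat_pow.2 hp)
  have heven (n : ℕ) :
      1 / (((2 * n + 1 : ℕ) : ℝ) + 1) ^ p = 1 / 2 ^ p * (1 / ((n : ℝ) + 1) ^ p) := by
    rw [one_div_mul_one_div, ← mul_pow]
    push_cast
    ring_nf
  have hsplit := tsum_even_add_odd (f := fun n : ℕ ↦ 1 / ((n : ℝ) + 1) ^ p)
    (by simpa using summable_one_div_odd_pow hp)
    ((hsucc.mul_left (1 / 2 ^ p)).congr fun n ↦ (heven n).symm)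
  simp_rw [heven, tsum_mul_left] at hsplit
  push_cast at hsplit
  linarith

end OddZeta

theorem integral_sq_div_sin :
    ∫ x in (0 : ℝ)..(π / 2), x ^ 2 / sin x =
      2 * (π * (∑' n : ℕ, (-1) ^ n / (2 * (n : ℝ) + 1) ^ 2) -
        2 * ∑' n : ℕ, 1 / (2 * (n : ℝ) + 1) ^ 3) := by
  have hsub : uIcc 0 (π / 2) ⊆ Ioo (-π) π := by
    rw [uIcc_of_le (by positivity)]
    exact Icc_subset_Ioo (by linarith [pi_pos]) (by linarith [pi_pos])
  have hexpand := tendsto_sum_integral_sin_odd_mul_sin_mul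
    (continuousOn_sq_div_sin.mono hsub).intervalIntegrable
  have hterm (k : ℕ) :
      ∫ x in (0 : ℝ)..(π / 2), 2 * sin ((2 * k + 1) * x) * (sin x * (x ^ 2 / sin x)) =
        2 * (π * ((-1) ^ k / (2 * k + 1) ^ 2) - 2 * (1 / (2 * k + 1) ^ 3)) := by
    rw [← integral_sq_mul_sin_odd, ← intervalIntegral.integral_const_mul]
    refine intervalIntegral.integral_congr fun x hx ↦ ?_
    have hcancel : sin x * (x ^ 2 / sin x) = x ^ 2 := by
      refine mul_div_cancel_of_imp' fun hsin ↦ ?_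
      rw [(sin_eq_zero_iff_of_lt_of_lt (hsub hx).1 (hsub hx).2).1 hsin, zero_pow two_ne_zero]
    simp only [hcancel]
    ring
  simp_rw [hterm] at hexpand
  have hsum := (((summable_neg_one_pow_div_odd_pow one_lt_two).hasSum.mul_left π).sub
    ((summable_one_div_odd_pow (p := 3) (by norm_num)).hasSum.mul_left 2)).mul_left 2
  exact tendsto_nhds_unique hexpand hsum.tendsto_sum_nat

theorem stmt18 :
    ∫ t in (0:ℝ)..1, (Real.arctan t) ^ 2 / t =
      (Real.pi / 2) * (∑' n : ℕ, (-1) ^ n / (2 * (n : ℝ) + 1) ^ 2) -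
        (7 / 8) * ∑' n : ℕ, 1 / ((n : ℝ) + 1) ^ 3 := by
  have hangle : 2 * arctan 1 = π / 2 := by rw [arctan_one]; ring
  rw [integral_arctan_sq_div, arctan_zero, mul_zero, hangle, integral_sq_div_sin,
    tsum_one_div_odd_pow (by norm_num)]
  ring
end
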